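/- arXiv:2204.13215 — 2 statements merged into one kernel-verified Lean document; each statement's English description precedes it below -/
import Mathlib

section
/- Fair model checking characterization for initialized formulas: let L be an LTS in which every state is reachable from s_init, let φ ∈ L⁺(F_p^∞), and let μ_L be the fair-coin measure of L. Then there exists k ∈ ℕ with μ_L({ρ : (ρ,k) ⊨ F φ}) = 1 if and only if for every BSCC B of L, every run ρ with ρ 0 ∈ B satisfies (ρ, |S| + 1) ⊨ φ. -/
open scoped Classical
open MeasureTheory

/-- A labelled transition system: a finite set of states `S`, an initial state,
a transition relation in which every state has at least one successor, and a
labeling of states by sets of atomic propositions. -/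
structure LTS (S AP : Type) where
  init : S
  T : S → S → Prop
  lbl : S → Set AP
  succ_nonempty : ∀ s : S, ∃ t : S, T s t

variable {S AP : Type}

/-- A run of an LTS: an infinite sequence of states following the transitions. -/
def IsRun (L : LTS S AP) (ρ : ℕ → S) : Prop := ∀ i : ℕ, L.T (ρ i) (ρ (i + 1))

/-- The shifted run `ρ[i..]`. -/
def shift (ρ : ℕ → S) (i : ℕ) : ℕ → S := fun n => ρ (n + i)

/-- Formulas of the prompt Muller fragment `L(F_p^∞)`:
`φ ::= α | ¬α | φ ∨ φ | φ ∧ φ | F_p^∞ φ`. -/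
inductive PM (AP : Type) : Type where
  | pos : AP → PM AP
  | neg : AP → PM AP
  | or : PM AP → PM AP → PM AP
  | and : PM AP → PM AP → PM AP
  | finf : PM AP → PM AP

/-- Satisfaction `(ρ, k) ⊨ φ` of a prompt Muller formula by a run at bound `k`. -/
def Sat (L : LTS S AP) : PM AP → (ℕ → S) → ℕ → Prop
  | .pos a, ρ, _ => a ∈ L.lbl (ρ 0)
  | .neg a, ρ, _ => a ∉ L.lbl (ρ 0)
  | .or φ ψ, ρ, k => Sat L φ ρ k ∨ Sat L ψ ρ k
  | .and φ ψ, ρ, k => Sat L φ ρ k ∧ Sat L ψ ρ k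
  | .finf φ, ρ, k => ∀ i : ℕ, ∃ j ≤ k, Sat L φ (shift ρ (i + j)) k

/-- The positive fragment `L⁺(F_p^∞)`: the smallest set of formulas containing
`F_p^∞ φ` for every formula `φ` and closed under `∨`, `∧` and `F_p^∞`. -/
inductive Positive {AP : Type} : PM AP → Prop where
  | finf (φ : PM AP) : Positive (.finf φ)
  | or {φ ψ : PM AP} : Positive φ → Positive ψ → Positive (.or φ ψ)
  | and {φ ψ : PM AP} : Positive φ → Positive ψ → Positive (.and φ ψ)

/-- Satisfaction `(ρ, k) ⊨ F ψ`: some suffix of `ρ` satisfies `ψ` at bound `k`. -/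
def SatF (L : LTS S AP) (ψ : PM AP) (ρ : ℕ → S) (k : ℕ) : Prop :=
  ∃ i : ℕ, Sat L ψ (shift ρ i) k

/-- Reachability along transitions. -/
def Reachable (L : LTS S AP) : S → S → Prop := Relation.ReflTransGen L.T

/-- A strongly connected component: an equivalence class of mutual reachability. -/
def IsSCC (L : LTS S AP) (C : Set S) : Prop :=
  ∃ s : S, C = {t : S | Reachable L s t ∧ Reachable L t s}

/-- A bottom strongly connected component: an SCC closed under transitions. -/
def IsBSCC (L : LTS S AP) (C : Set S) : Prop :=
  IsSCC L C ∧ ∀ s ∈ C, ∀ t : S, L.T s t → t ∈ C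

/-- The probability of one fair-coin step from `s` to `t`: the successor is chosen
uniformly at random among the successors of `s`. -/
noncomputable def stepProb (L : LTS S AP) (s t : S) : ENNReal :=
  if L.T s t then ((Nat.card {u : S // L.T s u} : ENNReal))⁻¹ else 0

/-- The product of the step probabilities along a finite sequence of states. -/
noncomputable def chainProb (L : LTS S AP) : List S → ENNReal
  | [] => 1
  | [_] => 1
  | s :: t :: rest => stepProb L s t * chainProb L (t :: rest)

/-- The cylinder `Cyl w` of infinite sequences extending the finite word `w`. -/
def Cyl (w : List S) : Set (ℕ → S) := {ρ | ∀ i : Fin w.length, ρ i = w.get i}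

/-- The fair-coin probability of the cylinder of a finite word: `1` on the initial
state, then the product of the uniform step probabilities. -/
noncomputable def pathProb (L : LTS S AP) (w : List S) : ENNReal :=
  (if w.head? = some L.init then 1 else 0) * chainProb L w

/-- `μ` is the fair-coin measure of `L`: the trajectory (Ionescu–Tulcea) law of the
Markov chain started at `L.init` that moves from each state to a uniformly chosen
successor; it is the unique probability measure on `S^ℕ` (product σ-algebra, `S`
discrete) giving every nonempty cylinder its path probability. -/
def IsFairMeasure [MeasurableSpace S] (L : LTS S AP) (μ : Measure (ℕ → S)) : Prop :=
  IsProbabilityMeasure μ ∧ ∀ w : List S, w ≠ [] → μ (Cyl w) = pathProb L w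

/-! ### Deterministic part -/

/-- Idealised truth value of a formula at a state, relative to a set `B` of states. -/
def Val (L : LTS S AP) (B : Set S) : PM AP → S → Prop
  | .pos a, s => a ∈ L.lbl s
  | .neg a, s => a ∉ L.lbl s
  | .or φ ψ, s => Val L B φ s ∨ Val L B ψ s
  | .and φ ψ, s => Val L B φ s ∧ Val L B ψ s
  | .finf φ, _ => ∀ p : ℕ → S, IsRun L p → (∀ i, p i ∈ B) → ∃ i, Val L B φ (p i)

theorem Val_positive (L : LTS S AP) (B : Set S) {φ : PM AP} (hφ : Positive φ) (s t : S)
    (h : Val L B φ s) : Val L B φ t := by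
  induction hφ with
  | finf φ => exact h
  | or _ _ ih1 ih2 => exact h.imp ih1 ih2
  | and _ _ ih1 ih2 => exact ⟨ih1 h.1, ih2 h.2⟩

theorem shift_shift (ρ : ℕ → S) (i j : ℕ) : shift (shift ρ i) j = shift ρ (i + j) := by
  funext n
  simp only [shift]
  congr 1
  omega

theorem IsRun.shift {L : LTS S AP} {ρ : ℕ → S} (h : IsRun L ρ) (i : ℕ) :
    IsRun L (shift ρ i) := by
  intro n
  have := h (n + i)
  simp only [_root_.shift]
  rwa [show n + 1 + i = n + i + 1 by omega]

theorem exists_loop {L : LTS S AP} {ρ : ℕ → S} (h : IsRun L ρ) {a b : ℕ} (hab : a < b)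
    (he : ρ a = ρ b) :
    ∃ p : ℕ → S, IsRun L p ∧ ∀ n, ∃ j, a ≤ j ∧ j < b ∧ p n = ρ j := by
  refine ⟨fun n => ρ (a + n % (b - a)), ?_, ?_⟩
  · intro n
    have hlt : n % (b - a) < b - a := Nat.mod_lt _ (by omega)
    show L.T (ρ (a + n % (b - a))) (ρ (a + (n + 1) % (b - a)))
    have hr := h (a + n % (b - a))
    by_cases hc : n % (b - a) + 1 = b - a
    · have h0 : (n + 1) % (b - a) = 0 := by
        rw [← Nat.mod_add_mod, hc, Nat.mod_self]
      rw [h0]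
      have : a + n % (b - a) + 1 = b := by omega
      rw [this, ← he] at hr
      simpa using hr
    · have h0 : (n + 1) % (b - a) = n % (b - a) + 1 := by
        rw [← Nat.mod_add_mod, Nat.mod_eq_of_lt (by omega)]
      rw [h0]
      exact hr
  · intro n
    have hlt : n % (b - a) < b - a := Nat.mod_lt _ (by omega)
    exact ⟨a + n % (b - a), by omega, by omega, rfl⟩

theorem Val_sat [Fintype S] (L : LTS S AP) (B : Set S) (φ : PM AP) :
    ∀ ρ : ℕ → S, IsRun L ρ → (∀ i, ρ i ∈ B) → Val L B φ (ρ 0) →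
      Sat L φ ρ (Fintype.card S + 1) := by
  induction φ with
  | pos a => intro ρ _ _ h; exact h
  | neg a => intro ρ _ _ h; exact h
  | or φ ψ ih1 ih2 => intro ρ hr hB h; exact h.imp (ih1 ρ hr hB) (ih2 ρ hr hB)
  | and φ ψ ih1 ih2 => intro ρ hr hB h; exact ⟨ih1 ρ hr hB h.1, ih2 ρ hr hB h.2⟩
  | finf φ ih =>
    intro ρ hr hB h i
    have key : ∃ j ≤ Fintype.card S + 1, Val L B φ (ρ (i + j)) := by
      obtain ⟨x, y, hxy, he⟩ := Fintype.exists_ne_map_eq_of_card_lt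
        (fun x : Fin (Fintype.card S + 1) => ρ (i + x)) (by simp)
      have hne : (x : ℕ) ≠ y := fun h => hxy (Fin.ext h)
      have : ∃ a b : ℕ, a < b ∧ b ≤ Fintype.card S ∧ ρ (i + a) = ρ (i + b) := by
        have hx := x.2
        have hy := y.2
        rcases lt_or_gt_of_ne hne with h1 | h1
        · exact ⟨x, y, h1, by omega, he⟩
        · exact ⟨y, x, h1, by omega, he.symm⟩
      obtain ⟨a, b, hab, hb, he⟩ := this
      obtain ⟨p, hp, hpj⟩ := exists_loop hr (show i + a < i + b by omega) he
      obtain ⟨n, hn⟩ := h p hp (fun n => by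
        obtain ⟨j, _, _, e⟩ := hpj n
        rw [e]; exact hB j)
      obtain ⟨j, hj1, hj2, e⟩ := hpj n
      refine ⟨j - i, by omega, ?_⟩
      rw [show i + (j - i) = j by omega, ← e]
      exact hn
    obtain ⟨j, hj, hv⟩ := key
    refine ⟨j, hj, ih _ (hr.shift _) (fun n => hB _) ?_⟩
    simpa [shift] using hv

/-- The word `w` (in reverse order) occurs in `ρ`, ending at position `n`. -/
def Ends (ρ : ℕ → S) : List S → ℕ → Prop
  | [], _ => True
  | _ :: _, 0 => False
  | t :: w, n + 1 => ρ (n + 1) = t ∧ Ends ρ w n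

theorem Ends_head {ρ : ℕ → S} {t : S} {w : List S} {n : ℕ} (h : Ends ρ (t :: w) n) : ρ n = t := by
  cases n with
  | zero => exact h.elim
  | succ n => exact h.1

/-- Every word occurring infinitely often is extended in all possible ways infinitely often. -/
def Fair (L : LTS S AP) (ρ : ℕ → S) : Prop :=
  ∀ (u t : S) (w : List S), L.T u t → (∃ᶠ n in Filter.atTop, Ends ρ (u :: w) n) →
    ∃ᶠ n in Filter.atTop, Ends ρ (t :: u :: w) n

/-- The state `s` occurs infinitely often. -/
def InfOft (ρ : ℕ → S) (s : S) : Prop := ∃ᶠ n in Filter.atTop, ρ n = s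

theorem InfOft.ends {ρ : ℕ → S} {s : S} (h : InfOft ρ s) : ∃ᶠ n in Filter.atTop, Ends ρ [s] n := by
  refine (h.and_eventually (Filter.eventually_ge_atTop 1)).mono ?_
  rintro n ⟨h1, h2⟩
  obtain ⟨m, rfl⟩ : ∃ m, n = m + 1 := ⟨n - 1, by omega⟩
  exact ⟨h1, trivial⟩

theorem InfOft.step {L : LTS S AP} {ρ : ℕ → S} (hf : Fair L ρ) {s t : S} (h : InfOft ρ s)
    (hT : L.T s t) : InfOft ρ t :=
  (hf s t [] hT h.ends).mono fun _ hn => Ends_head hn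

theorem InfOft.reach {L : LTS S AP} {ρ : ℕ → S} (hf : Fair L ρ) {s t : S} (h : InfOft ρ s)
    (hT : Reachable L s t) : InfOft ρ t := by
  induction hT with
  | refl => exact h
  | tail _ h2 ih => exact ih.step hf h2

theorem exists_infOft [Fintype S] (ρ : ℕ → S) : ∃ s, InfOft ρ s := by
  by_contra hc
  simp only [InfOft, not_exists, Filter.not_frequently] at hc
  obtain ⟨n, hn⟩ := (Filter.eventually_all.2 hc).exists
  exact hn _ rfl

theorem run_reach {L : LTS S AP} {ρ : ℕ → S} (h : IsRun L ρ) (n k : ℕ) :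
    Reachable L (ρ n) (ρ (n + k)) := by
  induction k with
  | zero => exact Relation.ReflTransGen.refl
  | succ k ih => exact ih.tail (h _)

/-- The reversed initial word of length `k+1` of `p`. -/
def revWord (p : ℕ → S) : ℕ → List S
  | 0 => [p 0]
  | k + 1 => p (k + 1) :: revWord p k

theorem revWord_cons (p : ℕ → S) (k : ℕ) : ∃ w, revWord p k = p k :: w := by
  cases k with
  | zero => exact ⟨_, rfl⟩
  | succ k => exact ⟨_, rfl⟩

theorem revWord_io {L : LTS S AP} {ρ p : ℕ → S} (hf : Fair L ρ) (hp : IsRun L p)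
    (h0 : InfOft ρ (p 0)) (k : ℕ) : ∃ᶠ n in Filter.atTop, Ends ρ (revWord p k) n := by
  induction k with
  | zero => exact h0.ends
  | succ k ih =>
    obtain ⟨w, hw⟩ := revWord_cons p k
    simp only [revWord]
    rw [hw] at ih ⊢
    exact hf _ _ _ (hp k) ih

theorem revWord_ends {ρ p : ℕ → S} (k : ℕ) : ∀ n, Ends ρ (revWord p k) n →
    k ≤ n ∧ ∀ j ≤ k, ρ (n - k + j) = p j := by
  induction k with
  | zero =>
    intro n h
    refine ⟨by omega, fun j hj => ?_⟩
    obtain rfl : j = 0 := by omega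
    exact Ends_head h
  | succ k ih =>
    intro n h
    cases n with
    | zero => exact h.elim
    | succ n =>
      obtain ⟨h1, h2⟩ := h
      obtain ⟨h3, h4⟩ := ih n h2
      refine ⟨by omega, fun j hj => ?_⟩
      rw [show n + 1 - (k + 1) = n - k by omega]
      by_cases hjk : j ≤ k
      · exact h4 j hjk
      · obtain rfl : j = k + 1 := by omega
        rw [show n - k + (k + 1) = n + 1 by omega]
        exact h1

theorem sat_Val {L : LTS S AP} {B : Set S} {ρ : ℕ → S} (hf : Fair L ρ)
    (hB : ∀ s ∈ B, InfOft ρ s) (k : ℕ) (φ : PM AP) :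
    ∀ i, Sat L φ (shift ρ i) k → Val L B φ (ρ i) := by
  induction φ with
  | pos a => intro i h; simpa [Sat, shift, Val] using h
  | neg a => intro i h; simpa [Sat, shift, Val] using h
  | or φ ψ ih1 ih2 => intro i h; exact h.imp (ih1 i) (ih2 i)
  | and φ ψ ih1 ih2 => intro i h; exact ⟨ih1 i h.1, ih2 i h.2⟩
  | finf φ ih =>
    intro i h p hp hpB
    obtain ⟨n, hn, hge⟩ := ((revWord_io hf hp (hB _ (hpB 0)) k).and_eventually
      (Filter.eventually_ge_atTop (i + k))).exists
    obtain ⟨h1, h2⟩ := revWord_ends k n hn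
    obtain ⟨j, hj, hs⟩ := h (n - k - i)
    rw [shift_shift, show i + (n - k - i + j) = n - k + j by omega] at hs
    exact ⟨j, h2 j hj ▸ ih _ hs⟩

theorem BSCC_run {L : LTS S AP} {B : Set S} (hB : ∀ s ∈ B, ∀ t : S, L.T s t → t ∈ B)
    {ρ : ℕ → S} (hr : IsRun L ρ) {n : ℕ} (h0 : ρ n ∈ B) (k : ℕ) : ρ (n + k) ∈ B := by
  induction k with
  | zero => exact h0
  | succ k ih => exact hB _ ih _ (hr _)

theorem forward_det [Fintype S] {L : LTS S AP} {φ : PM AP} (hφ : Positive φ) {B : Set S}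
    (hB : IsBSCC L B) {ρ : ℕ → S} (hr : IsRun L ρ) (hf : Fair L ρ) {n : ℕ} (hn : ρ n ∈ B)
    {k : ℕ} (hs : SatF L φ ρ k) (π : ℕ → S) (hπ : IsRun L π) (h0 : π 0 ∈ B) :
    Sat L φ π (Fintype.card S + 1) := by
  obtain ⟨⟨b, rfl⟩, hcl⟩ := hB
  obtain ⟨s, hs'⟩ := exists_infOft ρ
  obtain ⟨m, hm, hge⟩ := (hs'.and_eventually (Filter.eventually_ge_atTop n)).exists
  have hsB := BSCC_run hcl hr hn (m - n)
  rw [show n + (m - n) = m by omega, hm] at hsB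
  have hio : ∀ t ∈ {t : S | Reachable L b t ∧ Reachable L t b}, InfOft ρ t := by
    intro t ht
    exact hs'.reach hf (hsB.2.trans ht.1)
  obtain ⟨i, hi⟩ := hs
  refine Val_sat L {t : S | Reachable L b t ∧ Reachable L t b} φ π hπ (fun j => ?_)
    (Val_positive L _ hφ _ _ (sat_Val hf hio k φ i hi))
  have := BSCC_run hcl hπ h0 j
  rwa [Nat.zero_add] at this

theorem backward_det [Fintype S] {L : LTS S AP} {φ : PM AP} {ρ : ℕ → S} (hr : IsRun L ρ)
    (hf : Fair L ρ)
    (h : ∀ B : Set S, IsBSCC L B → ∀ ρ : ℕ → S, IsRun L ρ → ρ 0 ∈ B →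
      Sat L φ ρ (Fintype.card S + 1)) : SatF L φ ρ (Fintype.card S + 1) := by
  obtain ⟨s, hs⟩ := exists_infOft ρ
  obtain ⟨n, hn⟩ := hs.exists
  refine ⟨n, h {t : S | Reachable L s t ∧ Reachable L t s} ⟨⟨s, rfl⟩, ?_⟩ _ (hr.shift n) ?_⟩
  · intro t ht t' hT
    have hst' : Reachable L s t' := ht.1.tail hT
    refine ⟨hst', ?_⟩
    obtain ⟨a, ha⟩ := (hs.reach hf hst').exists
    obtain ⟨b, hb, hge⟩ := (hs.and_eventually (Filter.eventually_ge_atTop a)).exists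
    have := run_reach hr a (b - a)
    rwa [show a + (b - a) = b by omega, ha, hb] at this
  · simp only [shift, Nat.zero_add, hn]
    exact ⟨Relation.ReflTransGen.refl, Relation.ReflTransGen.refl⟩

/-! ### Probabilistic part -/

theorem chainProb_append (L : LTS S AP) (u t : S) : ∀ w : List S,
    chainProb L (w ++ [u] ++ [t]) = chainProb L (w ++ [u]) * stepProb L u t
  | [] => by simp [chainProb]
  | [a] => by simp [chainProb]
  | a :: b :: w => by
    have := chainProb_append L u t (b :: w)
    simp only [List.cons_append, chainProb] at this ⊢
    rw [this, mul_assoc]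

theorem pathProb_append (L : LTS S AP) (u t : S) (w : List S) :
    pathProb L (w ++ [u] ++ [t]) = pathProb L (w ++ [u]) * stepProb L u t := by
  unfold pathProb
  rw [chainProb_append, mul_assoc]
  congr 2
  cases w <;> simp

/-- The first `n+1` states. -/
def pref (n : ℕ) (ρ : ℕ → S) : Fin (n + 1) → S := fun i => ρ i

theorem measurable_pref [MeasurableSpace S] (n : ℕ) : Measurable (pref (S := S) n) :=
  measurable_pi_lambda _ fun i => measurable_pi_apply (i : ℕ)

/-- The canonical filtration. -/
def filt (S : Type) [MeasurableSpace S] : Filtration ℕ (MeasurableSpace.pi (X := fun _ : ℕ => S)) where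
  seq n := MeasurableSpace.comap (pref n) MeasurableSpace.pi
  mono' := by
    intro m n hmn
    have : pref (S := S) m = (fun f i => f (Fin.castLE (by omega) i)) ∘ pref (S := S) n := by
      funext ρ i
      simp [pref]
    show MeasurableSpace.comap (pref m) _ ≤ _
    rw [this, ← MeasurableSpace.comap_comp]
    exact MeasurableSpace.comap_mono
      (measurable_pi_lambda _ fun i => measurable_pi_apply _).comap_le
  le' n := (measurable_pref n).comap_le

theorem meas_coord {ι : Type} [MeasurableSpace S] [DiscreteMeasurableSpace S] (i : ι) (u : S) :
    MeasurableSet {ρ : ι → S | ρ i = u} := by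
  have h : MeasurableSet ((fun ρ : ι → S => ρ i) ⁻¹' {u}) :=
    measurableSet_preimage (measurable_pi_apply i) (MeasurableSet.singleton u)
  exact h

theorem filt_coord [MeasurableSpace S] [DiscreteMeasurableSpace S] {m n : ℕ} (h : m ≤ n) (u : S) :
    MeasurableSet[filt S n] {ρ : ℕ → S | ρ m = u} :=
  ⟨{f | f ⟨m, by omega⟩ = u},
    meas_coord (⟨m, by omega⟩ : Fin (n + 1)) u, rfl⟩

theorem filt_ends [MeasurableSpace S] [DiscreteMeasurableSpace S] (w : List S) : ∀ n : ℕ,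
    MeasurableSet[filt S n] {ρ : ℕ → S | Ends ρ w n} := by
  induction w with
  | nil => intro n; simp only [Ends]; exact @MeasurableSet.const _ (filt S n) _
  | cons t w ih =>
    intro n
    cases n with
    | zero => simp only [Ends]; exact @MeasurableSet.const _ (filt S 0) _
    | succ n =>
      exact @MeasurableSet.inter _ (filt S (n + 1)) _ _ (filt_coord le_rfl t)
        ((filt S).mono (Nat.le_succ n) _ (ih n))

theorem mem_Cyl_append (w : List S) (u : S) (ρ : ℕ → S) :
    ρ ∈ Cyl (w ++ [u]) ↔ ρ ∈ Cyl w ∧ ρ w.length = u := by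
  simp only [Cyl, Set.mem_ofPred_eq, Fin.forall_iff, List.get_eq_getElem]
  constructor
  · intro h
    refine ⟨fun i hi => ?_, ?_⟩
    · rw [h i (by simp; omega), List.getElem_append_left hi]
    · rw [h w.length (by simp)]; simp
  · rintro ⟨h1, h2⟩ i hi
    by_cases hiw : i < w.length
    · rw [h1 i hiw, List.getElem_append_left hiw]
    · simp at hi
      obtain rfl : i = w.length := by omega
      simp [h2]

theorem pref_eq_iff (n : ℕ) (c : Fin (n + 1) → S) (ρ : ℕ → S) :
    pref n ρ = c ↔ ρ ∈ Cyl (List.ofFn c) := by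
  simp only [Cyl, Set.mem_ofPred_eq, Fin.forall_iff, List.get_eq_getElem, funext_iff, pref,
    List.length_ofFn, List.getElem_ofFn]

theorem step_measure [Fintype S] [MeasurableSpace S] [DiscreteMeasurableSpace S]
    {L : LTS S AP} {μ : Measure (ℕ → S)} (hμ : IsFairMeasure L μ) {n : ℕ} {A : Set (ℕ → S)}
    (hA : MeasurableSet[filt S n] A) {u t : S} (hu : ∀ ρ ∈ A, ρ n = u) :
    μ (A ∩ {ρ | ρ (n + 1) = t}) = μ A * stepProb L u t := by
  obtain ⟨C, -, rfl⟩ := hA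
  have hm : ∀ c : Fin (n + 1) → S, MeasurableSet (pref n ⁻¹' {c}) := fun c =>
    measurable_pref n (MeasurableSet.singleton c)
  have e1 := sum_measure_preimage_singleton (μ := μ) C.toFinset (f := pref n) (fun c _ => hm c)
  have e2 := sum_measure_preimage_singleton (μ := μ.restrict {ρ | ρ (n + 1) = t})
    C.toFinset (f := pref n) (fun c _ => hm c)
  simp only [Set.coe_toFinset] at e1 e2
  have hX : MeasurableSet {ρ : ℕ → S | ρ (n + 1) = t} :=
    meas_coord (n + 1) t
  rw [Measure.restrict_apply' hX] at e2
  rw [← e1, ← e2, Finset.sum_mul]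
  refine Finset.sum_congr rfl fun c hc => ?_
  rw [Measure.restrict_apply (hm c)]
  have hcC : c ∈ C := by simpa using hc
  have hlast : c (Fin.last n) = u := by
    have : pref n (fun i => if h : i < n + 1 then c ⟨i, h⟩ else u) = c := by
      funext i
      simp only [pref]
      rw [dif_pos i.2]
    have h2 := hu (fun i => if h : i < n + 1 then c ⟨i, h⟩ else u) (by
      rw [Set.mem_preimage, this]; exact hcC)
    rw [dif_pos (Nat.lt_succ_self n)] at h2
    exact h2
  have hl : List.ofFn c = List.ofFn (fun i : Fin n => c i.castSucc) ++ [u] := by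
    rw [List.ofFn_succ', List.concat_eq_append, hlast]
  have h1 : pref n ⁻¹' {c} = Cyl (List.ofFn c) := by
    ext ρ
    exact pref_eq_iff n c ρ
  have h2 : pref n ⁻¹' {c} ∩ {ρ | ρ (n + 1) = t} = Cyl (List.ofFn c ++ [t]) := by
    ext ρ
    rw [h1, mem_Cyl_append, List.length_ofFn]
    rfl
  rw [h2, h1, hl, hμ.2 _ (by simp), hμ.2 _ (by simp), pathProb_append]

theorem stepProb_ne_zero [Fintype S] {L : LTS S AP} {u t : S} (h : L.T u t) :
    stepProb L u t ≠ 0 := by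
  simp [stepProb, h]

theorem stepProb_ne_top [Fintype S] (L : LTS S AP) (u t : S) :
    stepProb L u t ≠ ⊤ := by
  unfold stepProb
  split_ifs with h
  · have : Nonempty {u' : S // L.T u u'} := ⟨⟨t, h⟩⟩
    simp
  · simp

theorem ae_run [Fintype S] [MeasurableSpace S] [DiscreteMeasurableSpace S]
    {L : LTS S AP} {μ : Measure (ℕ → S)} (hμ : IsFairMeasure L μ) :
    ∀ᵐ ρ ∂μ, IsRun L ρ := by
  have h : ∀ (n : ℕ) (u t : S), ∀ᵐ ρ ∂μ, ρ n = u → ρ (n + 1) = t → L.T u t := by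
    intro n u t
    by_cases hT : L.T u t
    · exact Filter.Eventually.of_forall fun _ _ _ => hT
    · have := step_measure hμ (filt_coord (le_refl n) u) (t := t) (fun ρ h => h)
      simp only [stepProb, hT, if_false, mul_zero] at this
      rw [ae_iff]
      convert this using 2
      ext ρ
      simp [hT]
  filter_upwards [ae_all_iff.2 fun n => ae_all_iff.2 fun u => ae_all_iff.2 fun t => h n u t]
    with ρ hρ n
  exact hρ n _ _ rfl rfl

theorem io_extend [Fintype S] [MeasurableSpace S] [DiscreteMeasurableSpace S]
    {L : LTS S AP} {μ : Measure (ℕ → S)} (hμ : IsFairMeasure L μ) {u t : S} (hT : L.T u t)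
    (w : List S) :
    ∀ᵐ ρ ∂μ, (∃ᶠ n in Filter.atTop, Ends ρ (u :: w) n) →
      ∃ᶠ n in Filter.atTop, Ends ρ (t :: u :: w) n := by
  have := hμ.1
  set s : ℕ → Set (ℕ → S) := fun n => {ρ | Ends ρ (t :: u :: w) n} with hs
  set V : ℕ → Set (ℕ → S) := fun n => {ρ | Ends ρ (u :: w) n} with hV
  set p : ℝ := (stepProb L u t).toReal with hp
  have hp0 : 0 < p := ENNReal.toReal_pos (stepProb_ne_zero hT) (stepProb_ne_top L u t)
  have hVm : ∀ n, MeasurableSet (V n) := fun n => (filt S).le n _ (filt_ends _ n)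
  have hsm : ∀ n, MeasurableSet (s n) := fun n => (filt S).le n _ (filt_ends _ n)
  have hcond : ∀ n, (V n).indicator (fun _ => p) =ᵐ[μ]
      μ[(s (n + 1)).indicator (1 : (ℕ → S) → ℝ) | filt S n] := by
    intro n
    refine ae_eq_condExp_of_forall_setIntegral_eq ((filt S).le n) ?_ ?_ ?_ ?_
    · exact (integrable_const (1 : ℝ)).indicator (hsm _)
    · intro A _ _
      exact ((integrable_const p).indicator (hVm n)).integrableOn
    · intro A hA _
      have hA' := (filt S).le n _ hA
      rw [setIntegral_indicator (hVm n), setIntegral_indicator (hsm _)]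
      have key := step_measure hμ (A := A ∩ V n) (t := t)
        (@MeasurableSet.inter _ (filt S n) _ _ hA (filt_ends (u :: w) n))
        (fun ρ h => Ends_head h.2)
      have hset : A ∩ s (n + 1) = A ∩ V n ∩ {ρ | ρ (n + 1) = t} := by
        ext ρ
        simp only [hs, hV, Ends, Set.mem_inter_iff, Set.mem_ofPred_eq]
        tauto
      simp only [Pi.one_apply, setIntegral_const, smul_eq_mul, mul_one]
      rw [hset, measureReal_def, measureReal_def, key, ENNReal.toReal_mul]
    · have h1 : Measurable[filt S n] ((V n).indicator (fun _ => p)) :=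
        (@measurable_const _ _ _ (filt S n) p).indicator (filt_ends (u :: w) n)
      exact h1.stronglyMeasurable.aestronglyMeasurable
  have levy := ae_mem_limsup_atTop_iff (ℱ := filt S) μ (s := s) (fun n => filt_ends _ n)
  filter_upwards [levy, ae_all_iff.2 hcond] with ρ h1 h2 hio
  have hmem : ρ ∈ Filter.limsup s Filter.atTop := by
    rw [h1]
    simp only [← h2]
    have h3 : ρ ∈ Filter.limsup V Filter.atTop := by
      rw [Filter.mem_limsup_iff_frequently_mem]
      exact hio
    rw [Set.limsup_eq_tendsto_sum_indicator_atTop hp0 V] at h3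
    exact h3
  rw [Filter.mem_limsup_iff_frequently_mem] at hmem
  exact hmem

theorem ae_fair [Fintype S] [MeasurableSpace S] [DiscreteMeasurableSpace S]
    {L : LTS S AP} {μ : Measure (ℕ → S)} (hμ : IsFairMeasure L μ) :
    ∀ᵐ ρ ∂μ, Fair L ρ := by
  have : Countable (List S) := inferInstance
  refine ae_all_iff.2 fun u => ae_all_iff.2 fun t => ae_all_iff.2 fun w => ?_
  by_cases hT : L.T u t
  · filter_upwards [io_extend hμ hT w] with ρ h _
    exact h
  · exact Filter.Eventually.of_forall fun _ h => (hT h).elim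

theorem reach_pos [Fintype S] [MeasurableSpace S] 
    {L : LTS S AP} {μ : Measure (ℕ → S)} (hμ : IsFairMeasure L μ) {s : S}
    (hs : Reachable L L.init s) : ∃ w : List S, μ (Cyl (w ++ [s])) ≠ 0 := by
  induction hs with
  | refl => exact ⟨[], by rw [hμ.2 _ (by simp)]; simp [pathProb, chainProb]⟩
  | @tail b c _ h2 ih =>
    obtain ⟨w, hw⟩ := ih
    refine ⟨w ++ [b], ?_⟩
    rw [hμ.2 _ (by simp)] at hw ⊢
    rw [pathProb_append]
    exact mul_ne_zero hw (stepProb_ne_zero h2)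

theorem measurableSet_Cyl [MeasurableSpace S] [DiscreteMeasurableSpace S] (w : List S) :
    MeasurableSet (Cyl w) := by
  simp only [Cyl, Set.ofPred_forall]
  exact MeasurableSet.iInter fun i =>
    meas_coord (i : ℕ) (w.get i)

/-- **fair model checking characterization for initialized formulas.**
Let every state of `L` be reachable from the initial state, `φ ∈ L⁺(F_p^∞)` and `μ`
the fair-coin measure of `L`. Then there is `k` with `μ {ρ : (ρ,k) ⊨ F φ} = 1` iff
for every BSCC `B` of `L`, every run starting in `B` satisfies `(ρ, |S|+1) ⊨ φ`. -/
theorem fair_mc_characterization [Fintype S] [MeasurableSpace S] [DiscreteMeasurableSpace S]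
    (L : LTS S AP) (hreach : ∀ s : S, Reachable L L.init s)
    (φ : PM AP) (hφ : Positive φ) (μ : Measure (ℕ → S)) (hμ : IsFairMeasure L μ) :
    (∃ k : ℕ, μ {ρ : ℕ → S | SatF L φ ρ k} = 1) ↔
    (∀ B : Set S, IsBSCC L B → ∀ ρ : ℕ → S, IsRun L ρ → ρ 0 ∈ B →
      Sat L φ ρ (Fintype.card S + 1)) := by

  have := hμ.1
  constructor
  · rintro ⟨k, hk⟩ B hB π hπ h0
    obtain ⟨w, hw⟩ := reach_pos hμ (hreach (π 0))
    have hex : ∃ ρ, SatF L φ ρ k ∧ ρ ∈ Cyl (w ++ [π 0]) ∧ IsRun L ρ ∧ Fair L ρ := by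
      by_contra hc
      have hsub : ∀ᵐ ρ ∂μ, ρ ∈ {ρ : ℕ → S | SatF L φ ρ k} → ρ ∈ (Cyl (w ++ [π 0]))ᶜ := by
        filter_upwards [ae_run hμ, ae_fair hμ] with ρ h1 h2 h3 h4
        exact hc ⟨ρ, h3, h4, h1, h2⟩
      have hle : μ {ρ : ℕ → S | SatF L φ ρ k} ≤ μ (Cyl (w ++ [π 0]))ᶜ :=
        measure_mono_ae hsub
      rw [hk] at hle
      have hone := le_antisymm prob_le_one hle
      exact hw ((prob_compl_eq_one_iff (measurableSet_Cyl _)).1 hone)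
    obtain ⟨ρ, h1, h2, h3, h4⟩ := hex
    rw [mem_Cyl_append] at h2
    exact forward_det hφ hB h3 h4 (n := w.length) (by rw [h2.2]; exact h0) h1 π hπ h0
  · intro h
    refine ⟨Fintype.card S + 1, ?_⟩
    have hae : ∀ᵐ ρ ∂μ, ρ ∈ {ρ : ℕ → S | SatF L φ ρ (Fintype.card S + 1)} := by
      filter_upwards [ae_run hμ, ae_fair hμ] with ρ h1 h2
      exact backward_det h1 h2 h
    have heq : {ρ : ℕ → S | SatF L φ ρ (Fintype.card S + 1)} =ᵐ[μ] Set.univ :=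
      Filter.eventuallyEq_univ.2 hae
    rw [measure_congr heq, measure_univ]
end

section
/- Weak and strong prompt semantics coincide on strongly connected systems: let L be a strongly connected LTS and φ ∈ L(F_p^∞). Then there exists k ∈ ℕ such that every initialized run ρ satisfies (ρ,k) ⊨ φ, if and only if for every initialized run ρ there exists k ∈ ℕ with (ρ,k) ⊨ φ. -/
open scoped Classical
open MeasureTheory

variable {S AP : Type}

/-- Failure at a fixed bound is witnessed by a finite prefix. -/
theorem sat_safety (L : LTS S AP) (k : ℕ) (φ : PM AP) : ∀ ρ : ℕ → S, ¬ Sat L φ ρ k →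
    ∃ n : ℕ, ∀ ρ' : ℕ → S, (∀ i < n, ρ' i = ρ i) → ¬ Sat L φ ρ' k := by
  induction φ with
  | pos a =>
    intro ρ h
    refine ⟨1, fun ρ' e => ?_⟩
    simp only [Sat] at h ⊢
    rwa [e 0 (by omega)]
  | neg a =>
    intro ρ h
    refine ⟨1, fun ρ' e => ?_⟩
    simp only [Sat] at h ⊢
    rwa [e 0 (by omega)]
  | or φ ψ ih1 ih2 =>
    intro ρ h
    simp only [Sat, not_or] at h ⊢
    obtain ⟨n, hn⟩ := ih1 ρ h.1
    obtain ⟨m, hm⟩ := ih2 ρ h.2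
    exact ⟨n + m, fun ρ' e => ⟨hn ρ' fun i hi => e i (by omega), hm ρ' fun i hi => e i (by omega)⟩⟩
  | and φ ψ ih1 ih2 =>
    intro ρ h
    simp only [Sat] at h ⊢
    by_cases h1 : Sat L φ ρ k
    · obtain ⟨m, hm⟩ := ih2 ρ fun h2 => h ⟨h1, h2⟩
      exact ⟨m, fun ρ' e h' => hm ρ' e h'.2⟩
    · obtain ⟨m, hm⟩ := ih1 ρ h1
      exact ⟨m, fun ρ' e h' => hm ρ' e h'.1⟩
  | finf φ ih =>
    intro ρ h
    simp only [Sat, not_forall, not_exists, not_and] at h ⊢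
    obtain ⟨i, hi⟩ := h
    have key : ∀ j : ℕ, ∃ n : ℕ, j ≤ k → ∀ ρ' : ℕ → S,
        (∀ l < n, ρ' l = shift ρ (i + j) l) → ¬ Sat L φ ρ' k := by
      intro j
      by_cases hj : j ≤ k
      · obtain ⟨n, hn⟩ := ih _ (hi j hj)
        exact ⟨n, fun _ => hn⟩
      · exact ⟨0, fun h => absurd h hj⟩
    choose n hn using key
    refine ⟨i + k + (Finset.range (k + 1)).sup n, fun ρ' e => ⟨i, fun j hj => ?_⟩⟩
    apply hn j hj
    intro l hl
    have : n j ≤ (Finset.range (k + 1)).sup n :=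
      Finset.le_sup (f := n) (Finset.mem_range.2 (by omega))
    exact e _ (by omega)

theorem exists_path_to_run (L : LTS S AP) {s t : S} (h : Reachable L s t) (σ : ℕ → S)
    (hσ : IsRun L σ) (h0 : σ 0 = t) :
    ∃ τ : ℕ → S, IsRun L τ ∧ τ 0 = s ∧ ∃ d : ℕ, ∀ i, τ (d + i) = σ i := by
  induction h using Relation.ReflTransGen.head_induction_on with
  | refl => exact ⟨σ, hσ, h0, 0, fun i => by simp⟩
  | @head a c hac _ ih =>
    obtain ⟨τ, hτ, h1, d, hd⟩ := ih
    refine ⟨fun n => Nat.casesOn n a τ, ?_, rfl, d + 1, fun i => ?_⟩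
    · intro i
      cases i with
      | zero => simpa [h1] using hac
      | succ i => exact hτ i
    · rw [show d + 1 + i = (d + i) + 1 by omega]
      exact hd i

theorem exists_splice (L : LTS S AP) (hsc : ∀ s t : S, Reachable L s t) (ρ σ : ℕ → S)
    (hρ : IsRun L ρ) (hσ : IsRun L σ) (N : ℕ) :
    ∃ τ : ℕ → S, IsRun L τ ∧ (∀ i ≤ N, τ i = ρ i) ∧ ∃ d : ℕ, N ≤ d ∧ ∀ i, τ (d + i) = σ i := by
  obtain ⟨τ, hτ, h0, d, hd⟩ := exists_path_to_run L (hsc (ρ N) (σ 0)) σ hσ rfl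
  have hge : ∀ i, N ≤ i → (if i ≤ N then ρ i else τ (i - N)) = τ (i - N) := by
    intro i hi
    split_ifs with h
    · obtain rfl : i = N := by omega
      simp [h0]
    · rfl
  refine ⟨fun i => if i ≤ N then ρ i else τ (i - N), ?_, fun i hi => by simp [hi], N + d,
    by omega, fun i => ?_⟩
  · intro i
    by_cases h : i + 1 ≤ N
    · simpa [h, show i ≤ N by omega] using hρ i
    · show L.T (if i ≤ N then ρ i else τ (i - N)) (if i + 1 ≤ N then ρ (i+1) else τ (i + 1 - N))
      rw [hge i (by omega), hge (i+1) (by omega), show i + 1 - N = (i - N) + 1 by omega]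
      exact hτ _
  · show (if N + d + i ≤ N then ρ (N + d + i) else τ (N + d + i - N)) = σ i
    rw [hge _ (by omega), ← hd, show N + d + i - N = d + i by omega]

theorem exists_run (L : LTS S AP) (s : S) : ∃ ρ : ℕ → S, IsRun L ρ ∧ ρ 0 = s := by
  choose f hf using L.succ_nonempty
  exact ⟨fun n => f^[n] s, fun i => by simpa [Function.iterate_succ_apply'] using hf _, rfl⟩

/-- An initialized run containing every finite path as an infix. -/
theorem exists_universal [Fintype S] (L : LTS S AP) (hsc : ∀ s t : S, Reachable L s t) :
    ∃ ρ : ℕ → S, IsRun L ρ ∧ ρ 0 = L.init ∧ ∀ ρ' : ℕ → S, IsRun L ρ' → ∀ n : ℕ,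
      ∃ m : ℕ, ∀ i < n, ρ (m + i) = ρ' i := by
  obtain ⟨ρ₀, hρ₀, h0⟩ := exists_run L L.init
  have key : ∀ p : List S, ∃ σ : ℕ → S, IsRun L σ ∧
      ((∃ ρ' : ℕ → S, IsRun L ρ' ∧ (List.range p.length).map ρ' = p) →
        (List.range p.length).map σ = p) := by
    intro p
    by_cases h : ∃ ρ' : ℕ → S, IsRun L ρ' ∧ (List.range p.length).map ρ' = p
    · obtain ⟨σ, h1, h2⟩ := h
      exact ⟨σ, h1, fun _ => h2⟩
    · exact ⟨ρ₀, hρ₀, fun h' => absurd h' h⟩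
  choose σ hσ hσp using key
  obtain ⟨f, hf⟩ := exists_surjective_nat (List S)
  have step : ∀ (n : ℕ) (x : {ρ : ℕ → S // IsRun L ρ} × ℕ),
      ∃ y : {ρ : ℕ → S // IsRun L ρ} × ℕ, x.2 < y.2 ∧ (∀ i ≤ x.2, y.1.1 i = x.1.1 i) ∧
        ∃ d : ℕ, d + (f n).length ≤ y.2 ∧ ∀ i, y.1.1 (d + i) = σ (f n) i := by
    intro n x
    obtain ⟨τ, hτ, h1, d, h2, h3⟩ := exists_splice L hsc x.1.1 (σ (f n)) x.1.2 (hσ _) x.2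
    exact ⟨⟨⟨τ, hτ⟩, d + (f n).length + 1⟩, by simp only; omega, h1, d, by simp, h3⟩
  choose g hg1 hg2 hg3 using step
  let X : ℕ → {ρ : ℕ → S // IsRun L ρ} × ℕ := fun n => Nat.rec (⟨ρ₀, hρ₀⟩, 0) g n
  have hX : ∀ n, X (n + 1) = g n (X n) := fun n => rfl
  have hlt : ∀ n, (X n).2 < (X (n+1)).2 := fun n => hg1 n (X n)
  have hmono : StrictMono fun n => (X n).2 := strictMono_nat_of_lt_succ hlt
  have hle : ∀ n, n ≤ (X n).2 := fun n => hmono.le_apply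
  have hag : ∀ n m, n ≤ m → ∀ i ≤ (X n).2, (X m).1.1 i = (X n).1.1 i := by
    intro n m hnm
    induction m, hnm using Nat.le_induction with
    | base => intro i _; rfl
    | succ m hm ih =>
      intro i hi
      rw [← ih i hi, hX]
      exact hg2 m (X m) i (hi.trans (hmono.monotone hm))
  have hlim : ∀ n, ∀ i ≤ (X n).2, (X i).1.1 i = (X n).1.1 i := by
    intro n i hi
    rcases le_total n i with h | h
    · exact hag n i h i hi
    · exact (hag i n h i (hle i)).symm
  refine ⟨fun i => (X i).1.1 i, ?_, h0, ?_⟩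
  · intro i
    show L.T ((X i).1.1 i) ((X (i+1)).1.1 (i+1))
    rw [hlim (i+1) i (by have := hle (i+1); omega)]
    exact (X (i+1)).1.2 i
  · intro ρ' hρ' n
    obtain ⟨j, hj⟩ := hf ((List.range n).map ρ')
    obtain ⟨d, hd1, hd2⟩ := hg3 j (X j)
    rw [← hX] at hd1 hd2
    have hlen : (f j).length = n := by simp [hj]
    have hp := hσp (f j) ⟨ρ', hρ', by rw [hlen, hj]⟩
    rw [hlen] at hp
    rw [hlen] at hd1
    refine ⟨d, fun i hi => ?_⟩
    show (X (d+i)).1.1 (d+i) = ρ' i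
    rw [hlim (j+1) (d+i) (by omega), hd2]
    have := hp.trans hj
    exact List.map_inj_left.1 this i (List.mem_range.2 hi)

theorem sat_of_universal (L : LTS S AP) (ρ : ℕ → S)
    (hu : ∀ ρ' : ℕ → S, IsRun L ρ' → ∀ n : ℕ, ∃ m : ℕ, ∀ i < n, ρ (m + i) = ρ' i)
    (k : ℕ) (ρ' : ℕ → S) (hρ' : IsRun L ρ') (h0 : ρ' 0 = ρ 0) (φ : PM AP) :
    Sat L φ ρ k → Sat L φ ρ' k := by
  induction φ with
  | pos a => simp only [Sat, h0]; exact id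
  | neg a => simp only [Sat, h0]; exact id
  | or φ ψ ih1 ih2 => exact Or.imp ih1 ih2
  | and φ ψ ih1 ih2 => exact And.imp ih1 ih2
  | finf φ _ =>
    intro h
    by_contra hc
    obtain ⟨n, hn⟩ := sat_safety L k _ ρ' hc
    obtain ⟨m, hm⟩ := hu ρ' hρ' n
    refine hn (shift ρ m) (fun i hi => ?_) ?_
    · rw [← hm i hi, add_comm]; rfl
    · intro i
      obtain ⟨j, hj, hs⟩ := h (m + i)
      refine ⟨j, hj, ?_⟩
      have : shift (shift ρ m) (i + j) = shift ρ (m + i + j) := by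
        funext l
        simp only [shift]
        congr 1
        omega
      rwa [this]

/-- Weak and strong prompt semantics coincide on strongly connected
systems: for `L` strongly connected and `φ ∈ L(F_p^∞)`, there is `k` such that every
initialized run satisfies `(ρ,k) ⊨ φ` iff every initialized run satisfies `(ρ,k) ⊨ φ`
for some `k` (depending on the run). -/
theorem weak_eq_strong_strongly_connected [Fintype S] (L : LTS S AP)
    (hsc : ∀ s t : S, Reachable L s t) (φ : PM AP) :
    (∃ k : ℕ, ∀ ρ : ℕ → S, IsRun L ρ → ρ 0 = L.init → Sat L φ ρ k) ↔
    (∀ ρ : ℕ → S, IsRun L ρ → ρ 0 = L.init → ∃ k : ℕ, Sat L φ ρ k) := by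
  constructor
  · rintro ⟨k, hk⟩ ρ h1 h2
    exact ⟨k, hk ρ h1 h2⟩
  · intro h
    obtain ⟨ρ, h1, h2, hu⟩ := exists_universal L hsc
    obtain ⟨k, hk⟩ := h ρ h1 h2
    exact ⟨k, fun ρ' h1' h2' => sat_of_universal L ρ hu k ρ' h1' (h2'.trans h2.symm) φ hk⟩
end
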